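/- arXiv:1904.10369 — 9 statements merged into one kernel-verified Lean document; each statement's English description precedes it below -/
import Mathlib

section
/- Let Q ∈ ℝ^{n×n} be symmetric positive semi-definite, A ∈ ℝ^{m×n}, b ∈ ℝ^m, c ∈ ℝ^n, μ > 0, λ ∈ ℝ^m and ζ ∈ ℝ^n. Suppose (x*, y*, z*) is a KKT triple for (P)-(D), and suppose (x_r, y_r, z_r) ∈ ℝⁿ×ℝᵐ×ℝⁿ satisfies the proximal optimality conditions A x_r + μ(y_r − λ) = b, c + Q x_r − Aᵀ y_r − z_r + μ(x_r − ζ) = 0, x_r ≥ 0, z_r ≥ 0, and (x_r)ᵀ z_r = 0. Then ‖(x_r, y_r) − (x*, y*)‖₂ ≤ ‖(ζ, λ) − (x*, y*)‖₂, where the norm is the Euclidean norm on ℝ^{n+m}. -/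
open Matrix

/-- Non-expansiveness of the PMM proximal step: the solution of the proximal
sub-problem is at least as close to a KKT point of (P)-(D) as the estimates. -/
theorem pmm_proximal_nonexpansive {n m : ℕ}
    (Q : Matrix (Fin n) (Fin n) ℝ) (hQ : Q.PosSemidef)
    (A : Matrix (Fin m) (Fin n) ℝ) (b : Fin m → ℝ) (c : Fin n → ℝ)
    (μ : ℝ) (hμ : 0 < μ) (lam : Fin m → ℝ) (ζ : Fin n → ℝ)
    (xs : Fin n → ℝ) (ys : Fin m → ℝ) (zs : Fin n → ℝ)
    (hs1 : c + Q *ᵥ xs - Aᵀ *ᵥ ys - zs = 0)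
    (hs2 : A *ᵥ xs = b)
    (hs3 : 0 ≤ xs) (hs4 : 0 ≤ zs) (hs5 : xs ⬝ᵥ zs = 0)
    (xr : Fin n → ℝ) (yr : Fin m → ℝ) (zr : Fin n → ℝ)
    (hr1 : A *ᵥ xr + μ • (yr - lam) = b)
    (hr2 : c + Q *ᵥ xr - Aᵀ *ᵥ yr - zr + μ • (xr - ζ) = 0)
    (hr3 : 0 ≤ xr) (hr4 : 0 ≤ zr) (hr5 : xr ⬝ᵥ zr = 0) :
    Real.sqrt ((xr - xs) ⬝ᵥ (xr - xs) + (yr - ys) ⬝ᵥ (yr - ys)) ≤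
      Real.sqrt ((ζ - xs) ⬝ᵥ (ζ - xs) + (lam - ys) ⬝ᵥ (lam - ys)) := by
  apply Real.sqrt_le_sqrt
  obtain ⟨d, hd⟩ : ∃ d, d = xr - xs := ⟨_, rfl⟩
  obtain ⟨e, he⟩ : ∃ e, e = yr - ys := ⟨_, rfl⟩
  obtain ⟨p, hp⟩ : ∃ p, p = xr - ζ := ⟨_, rfl⟩
  obtain ⟨q, hq⟩ : ∃ q, q = yr - lam := ⟨_, rfl⟩
  have h1 : Q *ᵥ d - Aᵀ *ᵥ e - (zr - zs) + μ • p = 0 := by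
    have : Q *ᵥ d - Aᵀ *ᵥ e - (zr - zs) + μ • p
        = (c + Q *ᵥ xr - Aᵀ *ᵥ yr - zr + μ • (xr - ζ)) - (c + Q *ᵥ xs - Aᵀ *ᵥ ys - zs) := by
      rw [hd, he, hp, mulVec_sub, mulVec_sub]; abel
    rw [this, hr2, hs1, sub_zero]
  have h2 : A *ᵥ d + μ • q = 0 := by
    have : A *ᵥ d + μ • q = (A *ᵥ xr + μ • (yr - lam)) - A *ᵥ xs := by
      rw [hd, hq, mulVec_sub]; abel
    rw [this, hr1, hs2, sub_self]
  have h3 := congrArg (fun v => d ⬝ᵥ v) h1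
  have h4 := congrArg (fun v => e ⬝ᵥ v) h2
  simp only [dotProduct_add, dotProduct_sub, dotProduct_smul, dotProduct_zero, smul_eq_mul] at h3 h4
  have h5 : d ⬝ᵥ (Aᵀ *ᵥ e) = e ⬝ᵥ (A *ᵥ d) := by
    rw [mulVec_transpose, dotProduct_comm, dotProduct_mulVec]
  have h6 : 0 ≤ d ⬝ᵥ (Q *ᵥ d) := by
    simpa using hQ.dotProduct_mulVec_nonneg d
  have h7 : d ⬝ᵥ zr - d ⬝ᵥ zs ≤ 0 := by
    have a1 : 0 ≤ xs ⬝ᵥ zr := dotProduct_nonneg_of_nonneg hs3 hr4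
    have a2 : 0 ≤ xr ⬝ᵥ zs := dotProduct_nonneg_of_nonneg hr3 hs4
    rw [hd, sub_dotProduct, sub_dotProduct]
    linarith
  have h8 : d ⬝ᵥ p + e ⬝ᵥ q ≤ 0 := by
    by_contra hc
    have := mul_pos hμ (not_le.mp hc)
    linarith
  have e1 : ζ - xs = d - p := by rw [hd, hp]; abel
  have e2 : lam - ys = e - q := by rw [he, hq]; abel
  have p1 : 0 ≤ p ⬝ᵥ p := Finset.sum_nonneg fun i _ => mul_self_nonneg _
  have p2 : 0 ≤ q ⬝ᵥ q := Finset.sum_nonneg fun i _ => mul_self_nonneg _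
  rw [e1, e2, ← hd, ← he]
  simp only [dotProduct_sub, sub_dotProduct]
  rw [dotProduct_comm p d, dotProduct_comm q e]
  linarith
end

section
/- Let Q ∈ ℝ^{n×n} be symmetric positive semi-definite, A ∈ ℝ^{m×n}, and μ ≥ 0. If x̄, z̄ ∈ ℝⁿ and ȳ ∈ ℝᵐ satisfy A x̄ + μ ȳ = 0 and −Q x̄ + Aᵀ ȳ + z̄ − μ x̄ = 0, then x̄ᵀ z̄ = x̄ᵀ(Q + μI) x̄ + μ ȳᵀ ȳ ≥ 0. -/
open Matrix

/-- Key orthogonality/sign property of the regularized homogeneous KKT system. -/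
theorem regularized_kkt_orthogonality {n m : ℕ}
    (Q : Matrix (Fin n) (Fin n) ℝ) (hQ : Q.PosSemidef)
    (A : Matrix (Fin m) (Fin n) ℝ) (μ : ℝ) (hμ : 0 ≤ μ)
    (xb zb : Fin n → ℝ) (yb : Fin m → ℝ)
    (h1 : A *ᵥ xb + μ • yb = 0)
    (h2 : -(Q *ᵥ xb) + Aᵀ *ᵥ yb + zb - μ • xb = 0) :
    xb ⬝ᵥ zb = xb ⬝ᵥ ((Q + μ • (1 : Matrix (Fin n) (Fin n) ℝ)) *ᵥ xb) + μ * (yb ⬝ᵥ yb)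
      ∧ 0 ≤ xb ⬝ᵥ zb := by
  have e1 := congrArg (fun v => yb ⬝ᵥ v) h1
  have e2 := congrArg (fun v => xb ⬝ᵥ v) h2
  simp only [dotProduct_add, dotProduct_sub, dotProduct_neg, dotProduct_smul, smul_eq_mul,
    dotProduct_zero] at e1 e2
  have e3 : xb ⬝ᵥ (Aᵀ *ᵥ yb) = yb ⬝ᵥ (A *ᵥ xb) := by
    rw [mulVec_transpose, dotProduct_comm, dotProduct_mulVec]
  have e4 : xb ⬝ᵥ ((Q + μ • (1 : Matrix (Fin n) (Fin n) ℝ)) *ᵥ xb)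
      = xb ⬝ᵥ (Q *ᵥ xb) + μ * (xb ⬝ᵥ xb) := by
    rw [add_mulVec, smul_mulVec, one_mulVec, dotProduct_add, dotProduct_smul, smul_eq_mul]
  have hq : 0 ≤ xb ⬝ᵥ (Q *ᵥ xb) := by
    simpa using hQ.dotProduct_mulVec_nonneg xb
  have hx : 0 ≤ xb ⬝ᵥ xb := Finset.sum_nonneg fun i _ => mul_self_nonneg _
  have hy : 0 ≤ yb ⬝ᵥ yb := Finset.sum_nonneg fun i _ => mul_self_nonneg _
  have hx' := mul_nonneg hμ hx
  have hy' := mul_nonneg hμ hy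
  rw [e4]
  constructor <;> linarith
end

section
/- Let n ≥ 1, μ > 0, C > 0, and 0 < σ_min ≤ 1. Let x, z ∈ ℝⁿ with xᵀz = nμ, let σ ∈ [σ_min, 1], and let Δx, Δz ∈ ℝⁿ satisfy zᵀΔx + xᵀΔz = (σ − 1) xᵀz and |ΔxᵀΔz| ≤ C² n⁴ μ. Then for every α with 0 ≤ α ≤ σ_min/(2 C² n³): (x + αΔx)ᵀ(z + αΔz) ≥ (1 − α(1 − σ_min/2)) xᵀz. -/
open Matrix

/-- First step-length estimate of IP-PMM: the complementarity product does not
decrease too fast along the Newton direction. -/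
theorem steplength_lower_bound {n : ℕ} (hn : 1 ≤ n) (μ C σmin σ : ℝ)
    (hμ : 0 < μ) (hC : 0 < C) (hσmin : 0 < σmin) (hσmin1 : σmin ≤ 1)
    (x z Δx Δz : Fin n → ℝ)
    (hxz : x ⬝ᵥ z = n * μ)
    (hσ : σ ∈ Set.Icc σmin 1)
    (hnewton : z ⬝ᵥ Δx + x ⬝ᵥ Δz = (σ - 1) * (x ⬝ᵥ z))
    (hΔ : |Δx ⬝ᵥ Δz| ≤ C ^ 2 * n ^ 4 * μ) :
    ∀ α : ℝ, 0 ≤ α → α ≤ σmin / (2 * C ^ 2 * n ^ 3) →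
      (1 - α * (1 - σmin / 2)) * (x ⬝ᵥ z) ≤ (x + α • Δx) ⬝ᵥ (z + α • Δz) := by
  intro α hα hle
  have hn0 : (0 : ℝ) < n := by exact_mod_cast hn
  rw [le_div_iff₀ (by positivity)] at hle
  have hexp : (x + α • Δx) ⬝ᵥ (z + α • Δz)
      = x ⬝ᵥ z + α * (z ⬝ᵥ Δx + x ⬝ᵥ Δz) + α ^ 2 * (Δx ⬝ᵥ Δz) := by
    rw [dotProduct_comm z Δx]
    simp only [add_dotProduct, dotProduct_add, smul_dotProduct, dotProduct_smul, smul_eq_mul]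
    ring
  rw [hexp, hnewton, hxz]
  have hnm : 0 < (n : ℝ) * μ := by positivity
  have h1 := mul_le_mul_of_nonneg_left (abs_le.mp hΔ).1 hα
  have h2 := mul_le_mul_of_nonneg_right hle hnm.le
  have h3 := mul_le_mul_of_nonneg_right hσ.1 hnm.le
  have h4 : 0 ≤ (σ - σmin / 2) * (n * μ) + α * (Δx ⬝ᵥ Δz) := by
    nlinarith
  have h5 := mul_nonneg hα h4
  nlinarith
end

section
/- Let n ≥ 1, μ > 0, C > 0. Let x, z ∈ ℝⁿ with xᵀz = nμ, let σ ∈ (0, 1/2], and let Δx, Δz ∈ ℝⁿ satisfy zᵀΔx + xᵀΔz = (σ − 1) xᵀz and |ΔxᵀΔz| ≤ C² n⁴ μ. Then for every α with 0 ≤ α ≤ 0.49/(C² n³): (x + αΔx)ᵀ(z + αΔz) ≤ (1 − 0.01 α) xᵀz. -/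
open Matrix

/-- Third step-length estimate of IP-PMM: sufficient decrease of the barrier
parameter along the Newton direction. -/
theorem steplength_decrease_bound {n : ℕ} (hn : 1 ≤ n) (μ C σ : ℝ)
    (hμ : 0 < μ) (hC : 0 < C)
    (x z Δx Δz : Fin n → ℝ)
    (hxz : x ⬝ᵥ z = n * μ)
    (hσ : σ ∈ Set.Ioc (0 : ℝ) (1 / 2))
    (hnewton : z ⬝ᵥ Δx + x ⬝ᵥ Δz = (σ - 1) * (x ⬝ᵥ z))
    (hΔ : |Δx ⬝ᵥ Δz| ≤ C ^ 2 * n ^ 4 * μ) :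
    ∀ α : ℝ, 0 ≤ α → α ≤ 0.49 / (C ^ 2 * n ^ 3) →
      (x + α • Δx) ⬝ᵥ (z + α • Δz) ≤ (1 - 0.01 * α) * (x ⬝ᵥ z) := by
  intro α h0 h1
  have hn' : (0 : ℝ) < n := by exact_mod_cast hn
  have hα : α * (C ^ 2 * n ^ 3) ≤ 0.49 := (le_div_iff₀ (by positivity)).1 h1
  have e : (x + α • Δx) ⬝ᵥ (z + α • Δz)
      = x ⬝ᵥ z + α * (z ⬝ᵥ Δx + x ⬝ᵥ Δz) + α * (α * (Δx ⬝ᵥ Δz)) := by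
    simp only [add_dotProduct, dotProduct_add, smul_dotProduct, dotProduct_smul, smul_eq_mul]
    rw [dotProduct_comm Δx z]
    ring
  have hd : α * (Δx ⬝ᵥ Δz) ≤ 0.49 * (n * μ) := by
    calc α * (Δx ⬝ᵥ Δz) ≤ α * (C ^ 2 * n ^ 4 * μ) :=
          mul_le_mul_of_nonneg_left ((le_abs_self _).trans hΔ) h0
      _ = α * (C ^ 2 * n ^ 3) * (n * μ) := by ring
      _ ≤ 0.49 * (n * μ) := mul_le_mul_of_nonneg_right hα (by positivity)
  have h2 := mul_le_mul_of_nonneg_left hd h0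
  have h3 : σ * (α * (n * μ)) ≤ 1 / 2 * (α * (n * μ)) :=
    mul_le_mul_of_nonneg_right hσ.2 (by positivity)
  rw [e, hnewton, hxz]
  norm_num at h2 h3 ⊢
  linarith
end

section
/- Let n ≥ 1, t ∈ [0,1], ξ > 0, and let x*, z*, x̃, z̃, x, z ∈ ℝⁿ satisfy: x ≥ 0, z ≥ 0, x* ≥ 0, z* ≥ 0, (x*)ᵀ z* = 0, x̃ ≥ ξ e, and z̃ ≥ ξ e (componentwise, where e is the all-ones vector). If ((1−t) x* + t x̃ − x)ᵀ ((1−t) z* + t z̃ − z) ≥ 0, then t ξ (∑_{i=1}^n x_i + ∑_{i=1}^n z_i) ≤ t(1−t) ((x*)ᵀ z̃ + x̃ᵀ z*) + t² x̃ᵀ z̃ + xᵀ z. -/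
open Matrix

/-- Core estimate in the proof that the iterates of IP-PMM are bounded. -/
theorem iterate_boundedness_estimate {n : ℕ} (hn : 1 ≤ n) (t ξ : ℝ)
    (ht : t ∈ Set.Icc (0 : ℝ) 1) (hξ : 0 < ξ)
    (xs zs xt zt x z : Fin n → ℝ)
    (hx : 0 ≤ x) (hz : 0 ≤ z) (hxs : 0 ≤ xs) (hzs : 0 ≤ zs)
    (hcomp : xs ⬝ᵥ zs = 0)
    (hxt : ∀ i, ξ ≤ xt i) (hzt : ∀ i, ξ ≤ zt i)
    (hkey : 0 ≤ ((1 - t) • xs + t • xt - x) ⬝ᵥ ((1 - t) • zs + t • zt - z)) :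
    t * ξ * ((∑ i, x i) + ∑ i, z i) ≤
      t * (1 - t) * (xs ⬝ᵥ zt + xt ⬝ᵥ zs) + t ^ 2 * (xt ⬝ᵥ zt) + x ⬝ᵥ z := by
  obtain ⟨ht0, ht1⟩ := ht
  have h1 : 0 ≤ xs ⬝ᵥ z := Finset.sum_nonneg fun i _ => mul_nonneg (hxs i) (hz i)
  have h2 : 0 ≤ x ⬝ᵥ zs := Finset.sum_nonneg fun i _ => mul_nonneg (hx i) (hzs i)
  have h3 : ξ * ∑ i, z i ≤ xt ⬝ᵥ z := by
    rw [Finset.mul_sum]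
    exact Finset.sum_le_sum fun i _ => mul_le_mul_of_nonneg_right (hxt i) (hz i)
  have h4 : ξ * ∑ i, x i ≤ x ⬝ᵥ zt := by
    rw [Finset.mul_sum]
    refine Finset.sum_le_sum fun i _ => ?_
    rw [mul_comm]
    exact mul_le_mul_of_nonneg_left (hzt i) (hx i)
  simp only [sub_dotProduct, add_dotProduct, dotProduct_sub, dotProduct_add, smul_dotProduct,
    dotProduct_smul, smul_eq_mul, hcomp] at hkey
  have h5 := mul_le_mul_of_nonneg_left h3 ht0
  have h6 := mul_le_mul_of_nonneg_left h4 ht0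
  have h7 := mul_nonneg (sub_nonneg.2 ht1) h1
  have h8 := mul_nonneg (sub_nonneg.2 ht1) h2
  linarith
end

section
/- Let Q ∈ ℝ^{n×n} be symmetric positive semi-definite, μ > 0, A ∈ ℝ^{m×n} arbitrary, and let X, Z ∈ ℝ^{n×n} be diagonal matrices with strictly positive diagonal entries. Then the (2n+m)×(2n+m) block matrix [[−(Q + μI_n), Aᵀ, I_n], [A, μ I_m, 0], [Z, 0, X]] is nonsingular. -/
open Matrix

/-- The Jacobian of the IP-PMM Newton system,
`[[−(Q + μI), Aᵀ, I], [A, μI, 0], [Z, 0, X]]`, is nonsingular for any `A`. -/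
theorem ippmm_newton_jacobian_nonsingular {n m : ℕ}
    (Q : Matrix (Fin n) (Fin n) ℝ) (hQ : Q.PosSemidef)
    (μ : ℝ) (hμ : 0 < μ)
    (A : Matrix (Fin m) (Fin n) ℝ)
    (x z : Fin n → ℝ) (hx : ∀ i, 0 < x i) (hz : ∀ i, 0 < z i) :
    (Matrix.fromBlocks
        (Matrix.fromBlocks (-(Q + μ • (1 : Matrix (Fin n) (Fin n) ℝ))) Aᵀ
          A (μ • (1 : Matrix (Fin m) (Fin m) ℝ)))
        (Matrix.fromRows (1 : Matrix (Fin n) (Fin n) ℝ) (0 : Matrix (Fin m) (Fin n) ℝ))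
        (Matrix.fromCols (Matrix.diagonal z) (0 : Matrix (Fin n) (Fin m) ℝ))
        (Matrix.diagonal x)).det ≠ 0 := by
  intro hdet
  obtain ⟨v, hv, h0⟩ := Matrix.exists_mulVec_eq_zero_iff.mpr hdet
  obtain ⟨a, b, c, rfl⟩ : ∃ a b c, v = Sum.elim (Sum.elim a b) c :=
    ⟨fun i => v (.inl (.inl i)), fun i => v (.inl (.inr i)), fun i => v (.inr i), by
      ext ((i | i) | i) <;> rfl⟩
  have e1 : ∀ i, -((Q *ᵥ a) i + μ * a i) + (Aᵀ *ᵥ b) i + c i = 0 := by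
    intro i
    have := congrFun h0 (.inl (.inl i))
    simpa [Matrix.fromBlocks_mulVec, Matrix.fromRows_mulVec, Matrix.neg_mulVec,
      Matrix.add_mulVec, Matrix.smul_mulVec, Function.comp_def] using this
  have e2 : ∀ i, (A *ᵥ a) i + μ * b i = 0 := by
    intro i
    have := congrFun h0 (.inl (.inr i))
    simpa [Matrix.fromBlocks_mulVec, Matrix.fromRows_mulVec, Matrix.neg_mulVec,
      Matrix.add_mulVec, Matrix.smul_mulVec, Function.comp_def] using this
  have e3 : ∀ i, z i * a i + x i * c i = 0 := by
    intro i
    have := congrFun h0 (.inr i)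
    simpa [Matrix.fromBlocks_mulVec, Matrix.fromCols_mulVec, Matrix.mulVec_diagonal,
      Function.comp_def] using this
  have hq : 0 ≤ a ⬝ᵥ (Q *ᵥ a) := by simpa using hQ.dotProduct_mulVec_nonneg a
  have hac : ∀ i, a i * c i ≤ 0 := by
    intro i
    have h1 : x i * (a i * c i) = -(z i * (a i * a i)) := by linear_combination a i * e3 i
    have h2 := mul_nonneg (hz i).le (mul_self_nonneg (a i))
    by_contra h
    have := mul_pos (hx i) (not_le.mp h)
    linarith
  have hac' : a ⬝ᵥ c ≤ 0 := Finset.sum_nonpos fun i _ => hac i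
  have hA : a ⬝ᵥ (Aᵀ *ᵥ b) = -(μ * (b ⬝ᵥ b)) := by
    have : A *ᵥ a = -(μ • b) := by
      ext i
      have := e2 i
      simp only [Pi.neg_apply, Pi.smul_apply, smul_eq_mul]
      linarith
    rw [Matrix.dotProduct_mulVec, Matrix.vecMul_transpose, this]
    simp
  have hs : a ⬝ᵥ (-(Q *ᵥ a + μ • a) + Aᵀ *ᵥ b + c) = 0 := by
    have : -(Q *ᵥ a + μ • a) + Aᵀ *ᵥ b + c = 0 := funext fun i => by simpa using e1 i
    rw [this, dotProduct_zero]
  simp only [dotProduct_add, dotProduct_neg, dotProduct_smul, smul_eq_mul, hA] at hs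
  have haa : 0 ≤ a ⬝ᵥ a := Finset.sum_nonneg fun i _ => mul_self_nonneg (a i)
  have hbb : 0 ≤ b ⬝ᵥ b := Finset.sum_nonneg fun i _ => mul_self_nonneg (b i)
  have ha0 : a = 0 := by
    have : μ * (a ⬝ᵥ a) = 0 := by nlinarith [mul_nonneg hμ.le haa, mul_nonneg hμ.le hbb]
    exact dotProduct_self_eq_zero.mp ((mul_eq_zero.mp this).resolve_left hμ.ne')
  have hb0 : b = 0 := by
    have : μ * (b ⬝ᵥ b) = 0 := by nlinarith [mul_nonneg hμ.le haa, mul_nonneg hμ.le hbb]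
    exact dotProduct_self_eq_zero.mp ((mul_eq_zero.mp this).resolve_left hμ.ne')
  have hc0 : c = 0 := by
    ext i
    have := e3 i
    simpa [ha0, (hx i).ne'] using this
  apply hv
  subst ha0 hb0 hc0
  ext ((i | i) | i) <;> rfl
end

section
/- Let A ∈ ℝ^{m×n}, Q ∈ ℝ^{n×n} symmetric positive semi-definite, b ∈ ℝ^m, c ∈ ℝ^n, b̄ ∈ ℝ^m, c̄ ∈ ℝ^n, μ_0 > 0 and C_N > 0. Let {x_k}, {z_k} ⊂ ℝⁿ and {y_k} ⊂ ℝᵐ be bounded sequences with x_k ≥ 0 and z_k ≥ 0, let {λ_k} ⊂ ℝᵐ and {ζ_k} ⊂ ℝⁿ be sequences such that {‖y_k − λ_k‖₂} and {‖x_k − ζ_k‖₂} are bounded, and let μ_k := x_kᵀ z_k / n. Suppose μ_k → 0, ‖A x_k + μ_k (y_k − λ_k) − b − (μ_k/μ_0) b̄‖₂ ≤ C_N μ_k/μ_0 for all k, and ‖−Q x_k + Aᵀ y_k + z_k − μ_k (x_k − ζ_k) − c − (μ_k/μ_0) c̄‖₂ ≤ C_N μ_k/μ_0 for all k. Then there exists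 a KKT triple (x*, y*, z*) for (P)-(D), i.e. x*, z* ∈ ℝⁿ, y* ∈ ℝᵐ with A x* = b, c + Q x* − Aᵀ y* − z* = 0, x* ≥ 0, z* ≥ 0, and (x*)ᵀ z* = 0; moreover (x*, y*, z*) can be taken as a limit point of {(x_k, y_k, z_k)}. -/
open Matrix

theorem ippmm_norm_le_sqrt {p : ℕ} (v : Fin p → ℝ) : ‖v‖ ≤ Real.sqrt (v ⬝ᵥ v) := by
  rw [pi_norm_le_iff_of_nonneg (Real.sqrt_nonneg _)]
  intro i
  rw [Real.norm_eq_abs]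
  apply Real.abs_le_sqrt
  rw [pow_two]
  exact Finset.single_le_sum (f := fun j => v j * v j) (fun j _ => mul_self_nonneg (v j))
    (Finset.mem_univ i)

theorem ippmm_smul_tendsto {p : ℕ} (μ : ℕ → ℝ) (w : ℕ → Fin p → ℝ)
    (hμ : Filter.Tendsto μ Filter.atTop (nhds 0))
    (hw : ∃ M, ∀ k, Real.sqrt (w k ⬝ᵥ w k) ≤ M) :
    Filter.Tendsto (fun k => μ k • w k) Filter.atTop (nhds 0) := by
  obtain ⟨M, hM⟩ := hw
  apply squeeze_zero_norm (a := fun k => |μ k| * M)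
  · intro k
    rw [norm_smul, Real.norm_eq_abs]
    exact mul_le_mul_of_nonneg_left ((ippmm_norm_le_sqrt _).trans (hM k)) (abs_nonneg _)
  · simpa using hμ.abs.mul_const M

/-- Global convergence of IP-PMM / necessary condition for infeasibility:
if the iterates and proximal gaps stay bounded, the neighbourhood conditions
hold and `μ_k → 0`, then (P)-(D) possesses a KKT triple, obtained as a limit
point of the iterates. -/
theorem ippmm_global_convergence {n m : ℕ} (hn : 0 < n)
    (A : Matrix (Fin m) (Fin n) ℝ)
    (Q : Matrix (Fin n) (Fin n) ℝ) (hQ : Q.PosSemidef)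
    (b bbar : Fin m → ℝ) (c cbar : Fin n → ℝ)
    (μ0 CN : ℝ) (hμ0 : 0 < μ0) (hCN : 0 < CN)
    (x z : ℕ → Fin n → ℝ) (y lam : ℕ → Fin m → ℝ) (ζ : ℕ → Fin n → ℝ)
    (μ : ℕ → ℝ) (hμdef : ∀ k, μ k = (x k ⬝ᵥ z k) / n)
    (hx0 : ∀ k, 0 ≤ x k) (hz0 : ∀ k, 0 ≤ z k)
    (hxb : ∃ M, ∀ k, Real.sqrt (x k ⬝ᵥ x k) ≤ M)
    (hyb : ∃ M, ∀ k, Real.sqrt (y k ⬝ᵥ y k) ≤ M)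
    (hzb : ∃ M, ∀ k, Real.sqrt (z k ⬝ᵥ z k) ≤ M)
    (hylam : ∃ M, ∀ k, Real.sqrt ((y k - lam k) ⬝ᵥ (y k - lam k)) ≤ M)
    (hxζ : ∃ M, ∀ k, Real.sqrt ((x k - ζ k) ⬝ᵥ (x k - ζ k)) ≤ M)
    (hμlim : Filter.Tendsto μ Filter.atTop (nhds 0))
    (hprim : ∀ k,
      Real.sqrt ((A *ᵥ x k + μ k • (y k - lam k) - b - (μ k / μ0) • bbar) ⬝ᵥ
        (A *ᵥ x k + μ k • (y k - lam k) - b - (μ k / μ0) • bbar)) ≤ CN * μ k / μ0)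
    (hdual : ∀ k,
      Real.sqrt ((-(Q *ᵥ x k) + Aᵀ *ᵥ y k + z k - μ k • (x k - ζ k) - c - (μ k / μ0) • cbar) ⬝ᵥ
        (-(Q *ᵥ x k) + Aᵀ *ᵥ y k + z k - μ k • (x k - ζ k) - c - (μ k / μ0) • cbar)) ≤
        CN * μ k / μ0) :
    ∃ xs : Fin n → ℝ, ∃ ys : Fin m → ℝ, ∃ zs : Fin n → ℝ,
      A *ᵥ xs = b ∧ c + Q *ᵥ xs - Aᵀ *ᵥ ys - zs = 0 ∧
      0 ≤ xs ∧ 0 ≤ zs ∧ xs ⬝ᵥ zs = 0 ∧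
      ∃ φ : ℕ → ℕ, StrictMono φ ∧
        Filter.Tendsto (fun k => (x (φ k), y (φ k), z (φ k))) Filter.atTop
          (nhds (xs, ys, zs)) := by
  obtain ⟨Mx, hMx⟩ := hxb
  obtain ⟨My, hMy⟩ := hyb
  obtain ⟨Mz, hMz⟩ := hzb
  have hdiv : Filter.Tendsto (fun k => μ k / μ0) Filter.atTop (nhds 0) := by
    simpa using hμlim.div_const μ0
  have hC : Filter.Tendsto (fun k => CN * μ k / μ0) Filter.atTop (nhds 0) := by
    simpa using (hμlim.const_mul CN).div_const μ0
  have hr := squeeze_zero_norm (fun k => (ippmm_norm_le_sqrt _).trans (hprim k)) hC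
  have hs := squeeze_zero_norm (fun k => (ippmm_norm_le_sqrt _).trans (hdual k)) hC
  have h1 := ippmm_smul_tendsto μ (fun k => y k - lam k) hμlim hylam
  have h2 := ippmm_smul_tendsto μ (fun k => x k - ζ k) hμlim hxζ
  have h3 : Filter.Tendsto (fun k => (μ k / μ0) • bbar) Filter.atTop (nhds 0) := by
    simpa using hdiv.smul_const bbar
  have h4 : Filter.Tendsto (fun k => (μ k / μ0) • cbar) Filter.atTop (nhds 0) := by
    simpa using hdiv.smul_const cbar
  have hA : Filter.Tendsto (fun k => A *ᵥ x k) Filter.atTop (nhds b) := by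
    have := ((hr.sub h1).add h3).add_const b
    simp only [sub_zero, add_zero, zero_add] at this
    refine this.congr fun k => ?_
    abel
  have hD : Filter.Tendsto (fun k => -(Q *ᵥ x k) + Aᵀ *ᵥ y k + z k) Filter.atTop (nhds c) := by
    have := ((hs.add h2).add h4).add_const c
    simp only [add_zero, zero_add] at this
    refine this.congr fun k => ?_
    abel
  have hxz : Filter.Tendsto (fun k => x k ⬝ᵥ z k) Filter.atTop (nhds 0) := by
    have := hμlim.mul_const (n : ℝ)
    rw [zero_mul] at this
    refine this.congr fun k => ?_
    rw [hμdef k]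
    have : (n : ℝ) ≠ 0 := by exact_mod_cast hn.ne'
    field_simp
  have hcomp : IsCompact (Metric.closedBall (0 : Fin n → ℝ) Mx ×ˢ
      (Metric.closedBall (0 : Fin m → ℝ) My ×ˢ Metric.closedBall (0 : Fin n → ℝ) Mz)) :=
    (isCompact_closedBall _ _).prod ((isCompact_closedBall _ _).prod (isCompact_closedBall _ _))
  obtain ⟨⟨xs, ys, zs⟩, -, φ, hφ, hlim⟩ := hcomp.tendsto_subseq
    (x := fun k => (x k, y k, z k)) (fun k => by
      simp only [Set.mem_prod, mem_closedBall_zero_iff]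
      exact ⟨(ippmm_norm_le_sqrt _).trans (hMx k), (ippmm_norm_le_sqrt _).trans (hMy k),
        (ippmm_norm_le_sqrt _).trans (hMz k)⟩)
  have hlim' : Filter.Tendsto (fun k => (x (φ k), y (φ k), z (φ k))) Filter.atTop
      (nhds (xs, ys, zs)) := hlim
  have hX : Filter.Tendsto (fun k => x (φ k)) Filter.atTop (nhds xs) := hlim'.fst_nhds
  have hY : Filter.Tendsto (fun k => y (φ k)) Filter.atTop (nhds ys) := hlim'.snd_nhds.fst_nhds
  have hZ : Filter.Tendsto (fun k => z (φ k)) Filter.atTop (nhds zs) := hlim'.snd_nhds.snd_nhds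
  have hmv : ∀ {p q : ℕ} (B : Matrix (Fin p) (Fin q) ℝ), Continuous (fun v => B *ᵥ v) :=
    fun B => continuous_const.matrix_mulVec continuous_id
  have hAX := ((hmv A).tendsto xs).comp hX
  have hQX := ((hmv Q).tendsto xs).comp hX
  have hAY := ((hmv Aᵀ).tendsto ys).comp hY
  have hφt := hφ.tendsto_atTop
  have e1 : A *ᵥ xs = b := tendsto_nhds_unique hAX (hA.comp hφt)
  have e2 : -(Q *ᵥ xs) + Aᵀ *ᵥ ys + zs = c :=
    tendsto_nhds_unique ((hQX.neg.add hAY).add hZ) (hD.comp hφt)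
  have hdot : Continuous (fun v : (Fin n → ℝ) × (Fin n → ℝ) => v.1 ⬝ᵥ v.2) :=
    continuous_fst.dotProduct continuous_snd
  have e3 : xs ⬝ᵥ zs = 0 :=
    tendsto_nhds_unique ((hdot.tendsto (xs, zs)).comp (hX.prodMk_nhds hZ)) (hxz.comp hφt)
  refine ⟨xs, ys, zs, e1, ?_, ge_of_tendsto' hX fun k => hx0 _, ge_of_tendsto' hZ fun k => hz0 _,
    e3, φ, hφ, hlim'⟩
  rw [← e2]
  abel
end

section
/- Let A ∈ ℝ^{m×n}, b, b̄, b̃ ∈ ℝ^m, μ > 0, μ_0 > 0, σ ∈ ℝ, λ ∈ ℝ^m, x, Δx ∈ ℝⁿ, y, Δy ∈ ℝᵐ, and θ ∈ ℝ. Suppose: (i) A x + μ (y − λ) = b + (μ/μ_0)(b̄ + b̃), and (ii) A Δx + μ Δy = b + (σμ/μ_0) b̄ − A x − σμ (y − λ). Define μ(α) := μ + α(σ−1)μ + α²θ for α ∈ ℝ. Then for every α ∈ ℝ: A(x + αΔx) + μ(α)(y + αΔy − λ) − b − (μ(α)/μ_0) b̄ = (1−α)(μ/μ_0) b̃ + α²(σ−1)μ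 Δy + α²θ (y − λ + αΔy − b̄/μ_0). -/
open Matrix

/-- Exact algebraic recursion for the scaled primal infeasibility along the
IP-PMM Newton direction. -/
theorem primal_infeasibility_recursion {n m : ℕ}
    (A : Matrix (Fin m) (Fin n) ℝ) (b bbar btil : Fin m → ℝ)
    (μ μ0 : ℝ) (hμ : 0 < μ) (hμ0 : 0 < μ0) (σ : ℝ)
    (lam : Fin m → ℝ) (x Δx : Fin n → ℝ) (y Δy : Fin m → ℝ) (θ : ℝ)
    (h1 : A *ᵥ x + μ • (y - lam) = b + (μ / μ0) • (bbar + btil))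
    (h2 : A *ᵥ Δx + μ • Δy =
      b + (σ * μ / μ0) • bbar - A *ᵥ x - (σ * μ) • (y - lam)) :
    ∀ α : ℝ,
      A *ᵥ (x + α • Δx) + (μ + α * (σ - 1) * μ + α ^ 2 * θ) • (y + α • Δy - lam)
          - b - ((μ + α * (σ - 1) * μ + α ^ 2 * θ) / μ0) • bbar
        = (1 - α) • ((μ / μ0) • btil) + (α ^ 2 * (σ - 1) * μ) • Δy
          + (α ^ 2 * θ) • (y - lam + α • Δy - (1 / μ0) • bbar) := by
  intro α
  rw [Matrix.mulVec_add, Matrix.mulVec_smul]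
  funext i
  have e1 := congrFun h1 i
  have e2 := congrFun h2 i
  simp only [Pi.add_apply, Pi.sub_apply, Pi.smul_apply, smul_eq_mul] at e1 e2 ⊢
  linear_combination (1 - α) * e1 + α * e2
end

section
/- Let A ∈ ℝ^{m×n}, Q ∈ ℝ^{n×n}, c, c̄, c̃ ∈ ℝⁿ, μ > 0, μ_0 > 0, σ ∈ ℝ, ζ ∈ ℝⁿ, x, Δx, z, Δz ∈ ℝⁿ, y, Δy ∈ ℝᵐ, and θ ∈ ℝ. Suppose: (i) −Q x + Aᵀ y + z − μ (x − ζ) = c + (μ/μ_0)(c̄ + c̃), and (ii) −(Q + μ I)Δx + Aᵀ Δy + Δz = c + (σμ/μ_0) c̄ + Q x − Aᵀ y − z + σμ (x − ζ). Define μ(α) := μ + α(σ−1)μ + α²θ for α ∈ ℝ. Then for every α ∈ ℝ: −Q(x + αΔx) + Aᵀ(y + αΔy) + (z + αΔz) − μ(α)(x + αΔx − ζ) − c − (μ(α)/μ_0) c̄ = (1−α)(μ/μ_0) c̃ − α²(σ−1)μ Δx − α²θ (x − ζ + αΔx + c̄/μ_0). -/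
open Matrix

/-- Exact algebraic recursion for the scaled dual infeasibility along the
IP-PMM Newton direction. -/
theorem dual_infeasibility_recursion {n m : ℕ}
    (A : Matrix (Fin m) (Fin n) ℝ) (Q : Matrix (Fin n) (Fin n) ℝ)
    (c cbar ctil : Fin n → ℝ)
    (μ μ0 : ℝ) (hμ : 0 < μ) (hμ0 : 0 < μ0) (σ : ℝ)
    (ζ : Fin n → ℝ) (x Δx z Δz : Fin n → ℝ) (y Δy : Fin m → ℝ) (θ : ℝ)
    (h1 : -(Q *ᵥ x) + Aᵀ *ᵥ y + z - μ • (x - ζ) = c + (μ / μ0) • (cbar + ctil))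
    (h2 : -((Q + μ • (1 : Matrix (Fin n) (Fin n) ℝ)) *ᵥ Δx) + Aᵀ *ᵥ Δy + Δz =
      c + (σ * μ / μ0) • cbar + Q *ᵥ x - Aᵀ *ᵥ y - z + (σ * μ) • (x - ζ)) :
    ∀ α : ℝ,
      -(Q *ᵥ (x + α • Δx)) + Aᵀ *ᵥ (y + α • Δy) + (z + α • Δz)
          - (μ + α * (σ - 1) * μ + α ^ 2 * θ) • (x + α • Δx - ζ)
          - c - ((μ + α * (σ - 1) * μ + α ^ 2 * θ) / μ0) • cbar
        = (1 - α) • ((μ / μ0) • ctil) - (α ^ 2 * (σ - 1) * μ) • Δx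
          - (α ^ 2 * θ) • (x - ζ + α • Δx + (1 / μ0) • cbar) := by
  intro α
  funext i
  have e1 := congrFun h1 i
  have e2 := congrFun h2 i
  simp only [Matrix.add_mulVec, Matrix.smul_mulVec, Matrix.one_mulVec, Matrix.mulVec_add,
    Matrix.mulVec_smul, Pi.add_apply, Pi.sub_apply, Pi.neg_apply, Pi.smul_apply,
    smul_eq_mul] at e1 e2 ⊢
  linear_combination (1 - α) * e1 + α * e2
end
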